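/- Universal approximation in weighted Sobolev norms (Theorem UAT_L2_noL): let w, q ≥ 1 and let μ, μ' be Borel probability measures on H with ‖μ‖_q < ∞ and ‖μ'‖_w < ∞. Then for every v ∈ C²_{w,q}(H) and every ε > 0, there exist d ∈ ℕ and f ∈ 𝒩_d such that the cylindrical function w_f satisfies ∫_H |v(x) − w_f(x)|^w μ(dx) < ε, ∫_H ‖Dv(x) − Dw_f(x)‖^w μ(dx) < ε, and ∫_{H×H} ‖(D²v(x) − D²w_f(x)) h‖^w μ(dx) μ'(dh) < ε. -/

import Mathlib

open Filter Topology MeasureTheory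
open scoped RealInnerProductSpace ENNReal

/-- The coordinate map `x ↦ (⟪e 0, x⟫, …, ⟪e (d-1), x⟫)` of a Hilbert space with respect to the
first `d` elements of a sequence `e`. -/
noncomputable def euclCoord {H : Type*} [NormedAddCommGroup H] [InnerProductSpace ℝ H]
    (e : ℕ → H) (d : ℕ) (x : H) : EuclideanSpace ℝ (Fin d) :=
  WithLp.toLp 2 (fun i : Fin d => ⟪e i, x⟫)

/-- The cylindrical function (Hilbert–Galerkin Neural Operator) with inner network `f`. -/
noncomputable def cyl {H : Type*} [NormedAddCommGroup H] [InnerProductSpace ℝ H]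
    (e : ℕ → H) {d : ℕ} (f : EuclideanSpace ℝ (Fin d) → ℝ) (x : H) : ℝ :=
  f (euclCoord e d x)

section helpers

variable {E F : Type*} [NormedAddCommGroup E] [InnerProductSpace ℝ E] [CompleteSpace E]
  [NormedAddCommGroup F] [InnerProductSpace ℝ F] [CompleteSpace F]

lemma aux_contDiff_gradient {g : F → ℝ} (hg : ContDiff ℝ 2 g) : ContDiff ℝ 1 (gradient g) := by
  have h1 : ContDiff ℝ 1 (fderiv ℝ g) := hg.fderiv_right (by norm_num)
  exact (InnerProductSpace.toDual ℝ F).symm.toContinuousLinearEquiv.contDiff.comp h1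

lemma aux_cont_hess {g : F → ℝ} (hg : ContDiff ℝ 2 g) : Continuous (fderiv ℝ (gradient g)) :=
  (aux_contDiff_gradient hg).continuous_fderiv (by norm_num)

lemma aux_gradient_comp {g : F → ℝ} (hg : ContDiff ℝ 2 g) (L : E →L[ℝ] F) :
    gradient (fun x => g (L x)) = fun x => L.adjoint (gradient g (L x)) := by
  funext x
  have hd : DifferentiableAt ℝ g (L x) := (hg.differentiable (by norm_num)) _
  have h1 : HasFDerivAt (fun x => g (L x)) ((fderiv ℝ g (L x)).comp L) x :=
    hd.hasFDerivAt.comp x L.hasFDerivAt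
  apply ext_inner_right ℝ
  intro y
  rw [ContinuousLinearMap.adjoint_inner_left, gradient, gradient, h1.fderiv]
  simp

lemma aux_hess_comp {g : F → ℝ} (hg : ContDiff ℝ 2 g) (L : E →L[ℝ] F) (x : E) :
    fderiv ℝ (gradient (fun x => g (L x))) x
      = L.adjoint.comp ((fderiv ℝ (gradient g) (L x)).comp L) := by
  rw [aux_gradient_comp hg L]
  have hd : DifferentiableAt ℝ (gradient g) (L x) :=
    ((aux_contDiff_gradient hg).differentiable (by norm_num)) _
  have h1 : HasFDerivAt (fun x => gradient g (L x)) ((fderiv ℝ (gradient g) (L x)).comp L) x :=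
    hd.hasFDerivAt.comp x L.hasFDerivAt
  exact (L.adjoint.hasFDerivAt.comp x h1).fderiv

lemma aux_add_rpow {a b p : ℝ} (ha : 0 ≤ a) (hb : 0 ≤ b) (hp : 1 ≤ p) :
    (a + b) ^ p ≤ 2 ^ (p - 1) * (a ^ p + b ^ p) := by
  lift a to NNReal using ha
  lift b to NNReal using hb
  exact_mod_cast NNReal.rpow_add_le_mul_rpow_add_rpow a b hp

lemma aux_triangle {X G : Type*} [TopologicalSpace X] [MeasurableSpace X] [OpensMeasurableSpace X]
    [NormedAddCommGroup G] (μ : Measure X) (w : ℝ) (hw : 1 ≤ w) (a b c : X → G)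
    (ha : Continuous a) (hb : Continuous b) :
    ∫⁻ x, ENNReal.ofReal (‖a x - c x‖ ^ w) ∂μ ≤
      ENNReal.ofReal (2 ^ (w - 1)) * (∫⁻ x, ENNReal.ofReal (‖a x - b x‖ ^ w) ∂μ +
        ∫⁻ x, ENNReal.ofReal (‖b x - c x‖ ^ w) ∂μ) := by
  have hw0 : 0 ≤ w := by linarith
  have hm : Measurable fun x => ENNReal.ofReal (‖a x - b x‖ ^ w) :=
    (ENNReal.continuous_ofReal.comp
      ((ha.sub hb).norm.rpow_const (fun _ => Or.inr hw0))).measurable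
  rw [← lintegral_add_left hm, ← lintegral_const_mul' _ _ ENNReal.ofReal_ne_top]
  apply lintegral_mono
  intro x
  simp only
  rw [← ENNReal.ofReal_add (by positivity) (by positivity), ← ENNReal.ofReal_mul (by positivity)]
  apply ENNReal.ofReal_le_ofReal
  calc ‖a x - c x‖ ^ w ≤ (‖a x - b x‖ + ‖b x - c x‖) ^ w := by
        apply Real.rpow_le_rpow (norm_nonneg _) (norm_sub_le_norm_sub_add_norm_sub _ _ _) hw0
    _ ≤ _ := aux_add_rpow (norm_nonneg _) (norm_nonneg _) hw

lemma aux_conv {X G : Type*} [TopologicalSpace X] [MeasurableSpace X] [OpensMeasurableSpace X]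
    [NormedAddCommGroup G] (μ : Measure X) (w : ℝ) (hw : 1 ≤ w) (a : X → G) (b : ℕ → X → G)
    (ha : Continuous a) (hb : ∀ n, Continuous (b n)) (g : X → ℝ)
    (hag : ∀ x, ‖a x‖ ^ w ≤ g x) (hbg : ∀ n x, ‖b n x‖ ^ w ≤ g x)
    (hg : ∫⁻ x, ENNReal.ofReal (g x) ∂μ < ⊤)
    (hlim : ∀ x, Tendsto (fun n => b n x) atTop (𝓝 (a x))) :
    Tendsto (fun n => ∫⁻ x, ENNReal.ofReal (‖a x - b n x‖ ^ w) ∂μ) atTop (𝓝 0) := by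
  have hw0 : 0 < w := by linarith
  have key : Tendsto (fun n => ∫⁻ x, ENNReal.ofReal (‖a x - b n x‖ ^ w) ∂μ) atTop
      (𝓝 (∫⁻ _, 0 ∂μ)) := by
    apply tendsto_lintegral_of_dominated_convergence
      (fun x => ENNReal.ofReal (2 ^ (w - 1) * 2) * ENNReal.ofReal (g x))
    · intro n
      exact (ENNReal.continuous_ofReal.comp
        ((ha.sub (hb n)).norm.rpow_const (fun _ => Or.inr hw0.le))).measurable
    · intro n
      refine Filter.Eventually.of_forall fun x => ?_
      simp only
      rw [← ENNReal.ofReal_mul (by positivity)]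
      apply ENNReal.ofReal_le_ofReal
      calc ‖a x - b n x‖ ^ w ≤ (‖a x‖ + ‖b n x‖) ^ w :=
            Real.rpow_le_rpow (norm_nonneg _) (norm_sub_le _ _) hw0.le
        _ ≤ 2 ^ (w - 1) * (‖a x‖ ^ w + ‖b n x‖ ^ w) :=
            aux_add_rpow (norm_nonneg _) (norm_nonneg _) hw
        _ ≤ 2 ^ (w - 1) * (g x + g x) := by
            gcongr
            · exact hag x
            · exact hbg n x
        _ = _ := by ring
    · rw [lintegral_const_mul' _ _ ENNReal.ofReal_ne_top]
      exact (ENNReal.mul_lt_top ENNReal.ofReal_lt_top hg).ne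
    · refine Filter.Eventually.of_forall fun x => ?_
      have h1 : Tendsto (fun n => ‖a x - b n x‖) atTop (𝓝 0) := by
        have := (tendsto_const_nhds (x := a x)).sub (hlim x)
        simpa using this.norm
      have h2 := h1.rpow_const (p := w) (Or.inr hw0.le)
      rw [Real.zero_rpow hw0.ne'] at h2
      simpa using ENNReal.tendsto_ofReal h2
  simpa using key

end helpers

section proj

variable {H : Type*} [NormedAddCommGroup H] [InnerProductSpace ℝ H] [CompleteSpace H]

/-- `euclCoord` as a continuous linear map. -/
noncomputable def auxA (e : ℕ → H) (d : ℕ) : H →L[ℝ] EuclideanSpace ℝ (Fin d) :=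
  ((EuclideanSpace.equiv (Fin d) ℝ).symm : (Fin d → ℝ) →L[ℝ] EuclideanSpace ℝ (Fin d)).comp
    (ContinuousLinearMap.pi fun i : Fin d => innerSL ℝ (e i))

lemma auxA_apply (e : ℕ → H) (d : ℕ) (x : H) : auxA e d x = euclCoord e d x := rfl

lemma auxA_apply_coord (e : ℕ → H) (d : ℕ) (x : H) (i : Fin d) : auxA e d x i = ⟪e i, x⟫ := rfl

lemma auxB_apply (e : ℕ → H) (d : ℕ) (y : EuclideanSpace ℝ (Fin d)) :
    (auxA e d).adjoint y = ∑ i : Fin d, y i • e i := by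
  apply ext_inner_right ℝ
  intro x
  rw [ContinuousLinearMap.adjoint_inner_left, sum_inner, PiLp.inner_apply]
  refine Finset.sum_congr rfl fun i _ => ?_
  rw [auxA_apply_coord, real_inner_smul_left]
  simp [mul_comm]

lemma auxAB (e : ℕ → H) (he : Orthonormal ℝ e) (d : ℕ) (y : EuclideanSpace ℝ (Fin d)) :
    auxA e d ((auxA e d).adjoint y) = y := by
  ext i
  rw [auxA_apply_coord, auxB_apply]
  have h := he.comp (fun i : Fin d => (i : ℕ)) Fin.val_injective
  have := h.inner_right_fintype (fun j => y j) i
  simpa using this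

lemma auxB_norm (e : ℕ → H) (he : Orthonormal ℝ e) (d : ℕ) (y : EuclideanSpace ℝ (Fin d)) :
    ‖(auxA e d).adjoint y‖ = ‖y‖ := by
  have h : ‖(auxA e d).adjoint y‖ ^ 2 = ‖y‖ ^ 2 := by
    rw [← real_inner_self_eq_norm_sq, ContinuousLinearMap.adjoint_inner_left, auxAB e he,
      real_inner_self_eq_norm_sq]
  exact (pow_left_inj₀ (norm_nonneg _) (norm_nonneg _) two_ne_zero).1 h

lemma auxB_opnorm (e : ℕ → H) (he : Orthonormal ℝ e) (d : ℕ) : ‖(auxA e d).adjoint‖ ≤ 1 :=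
  ContinuousLinearMap.opNorm_le_bound _ zero_le_one fun y => by rw [auxB_norm e he, one_mul]

lemma auxA_opnorm (e : ℕ → H) (he : Orthonormal ℝ e) (d : ℕ) : ‖auxA e d‖ ≤ 1 := by
  have := auxB_opnorm e he d
  rwa [LinearIsometryEquiv.norm_map] at this

lemma auxA_norm (e : ℕ → H) (he : Orthonormal ℝ e) (d : ℕ) (x : H) : ‖auxA e d x‖ ≤ ‖x‖ := by
  simpa using (auxA e d).le_of_opNorm_le (auxA_opnorm e he d) x

lemma auxP_norm (e : ℕ → H) (he : Orthonormal ℝ e) (d : ℕ) (x : H) :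
    ‖(auxA e d).adjoint (auxA e d x)‖ ≤ ‖x‖ := by
  rw [auxB_norm e he]; exact auxA_norm e he d x

lemma auxP_tendsto (e : ℕ → H) (he : Orthonormal ℝ e)
    (htot : Dense ((Submodule.span ℝ (Set.range e) : Submodule ℝ H) : Set H)) (x : H) :
    Tendsto (fun d => (auxA e d).adjoint (auxA e d x)) atTop (𝓝 x) := by
  have htop : ⊤ ≤ (Submodule.span ℝ (Set.range e)).topologicalClosure := by
    rw [Submodule.dense_iff_topologicalClosure_eq_top.1 htot]
  have h := ((HilbertBasis.mk he htop).hasSum_repr x).tendsto_sum_nat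
  refine h.congr fun d => ?_
  rw [auxB_apply, Finset.sum_range]
  refine Finset.sum_congr rfl fun i _ => ?_
  rw [auxA_apply_coord, HilbertBasis.repr_apply_apply]
  simp

lemma auxP_tendsto' (e : ℕ → H) (he : Orthonormal ℝ e)
    (htot : Dense ((Submodule.span ℝ (Set.range e) : Submodule ℝ H) : Set H)) (x : H)
    (u : ℕ → H) (hu : Tendsto u atTop (𝓝 x)) :
    Tendsto (fun d => (auxA e d).adjoint (auxA e d (u d))) atTop (𝓝 x) := by
  have h1 : Tendsto (fun d => (auxA e d).adjoint (auxA e d (u d - x))) atTop (𝓝 0) := by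
    apply squeeze_zero_norm (fun d => auxP_norm e he d (u d - x))
    simpa using (hu.sub (tendsto_const_nhds (x := x))).norm
  have := h1.add (auxP_tendsto e he htot x)
  simpa using this

lemma aux_secondCountable (e : ℕ → H)
    (htot : Dense ((Submodule.span ℝ (Set.range e) : Submodule ℝ H) : Set H)) :
    SecondCountableTopology H := by
  have h : TopologicalSpace.IsSeparable ((Submodule.span ℝ (Set.range e) : Submodule ℝ H) : Set H) :=
    (Set.countable_range e).isSeparable.span
  have h2 := h.closure
  rw [htot.closure_eq] at h2
  have : TopologicalSpace.SeparableSpace H := TopologicalSpace.isSeparable_univ_iff.1 h2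
  exact UniformSpace.secondCountable_of_separable H

end proj

/-- universal approximation in weighted Sobolev norms (Theorem UAT_L2_noL):
Hilbert–Galerkin Neural Operators built from classes `𝒩 d` of finite-dimensional C² functions
having the weighted Sobolev density property approximate every `v ∈ C²_{w,q}(H)` in the
weighted Sobolev-type norm determined by Borel probability measures `μ, μ'` with
`‖μ‖_q < ∞`, `‖μ'‖_w < ∞`. -/
theorem hgno_universal_approximation_weighted_sobolev
    {H : Type*} [NormedAddCommGroup H] [InnerProductSpace ℝ H] [CompleteSpace H]
    [MeasurableSpace H] [BorelSpace H]
    (e : ℕ → H) (he : Orthonormal ℝ e)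
    (htot : Dense ((Submodule.span ℝ (Set.range e) : Submodule ℝ H) : Set H))
    (N : ∀ d : ℕ, Set (EuclideanSpace ℝ (Fin d) → ℝ))
    (hNsmooth : ∀ d : ℕ, ∀ f ∈ N d, ContDiff ℝ 2 f)
    (hNdense : ∀ (d : ℕ) (w' : ℝ), 1 ≤ w' →
      ∀ ν : Measure (EuclideanSpace ℝ (Fin d)), IsFiniteMeasure ν →
      ∀ h : EuclideanSpace ℝ (Fin d) → ℝ, ContDiff ℝ 2 h →
      (∫⁻ y, ENNReal.ofReal
          (|h y| ^ w' + ‖gradient h y‖ ^ w' + ‖fderiv ℝ (gradient h) y‖ ^ w') ∂ν < ⊤) →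
      ∀ ε > 0, ∃ f ∈ N d,
        ∫⁻ y, ENNReal.ofReal
            (|h y - f y| ^ w' + ‖gradient h y - gradient f y‖ ^ w' +
              ‖fderiv ℝ (gradient h) y - fderiv ℝ (gradient f) y‖ ^ w') ∂ν
          < ENNReal.ofReal ε)
    (w q : ℝ) (hw : 1 ≤ w) (hq : 1 ≤ q)
    (μ μ' : Measure H) [IsProbabilityMeasure μ] [IsProbabilityMeasure μ']
    (hμq : ∫⁻ x, ENNReal.ofReal (‖x‖ ^ q) ∂μ < ⊤)
    (hμ'w : ∫⁻ h, ENNReal.ofReal (‖h‖ ^ w) ∂μ' < ⊤)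
    (v : H → ℝ) (hv : ContDiff ℝ 2 v)
    (C : ℝ) (hC : 0 < C)
    (hgrowth : ∀ x : H,
      |v x| ^ w + ‖gradient v x‖ ^ w + ‖fderiv ℝ (gradient v) x‖ ^ w ≤ C * (1 + ‖x‖ ^ q))
    (ε : ℝ) (hε : 0 < ε) :
    ∃ (d : ℕ) (f : EuclideanSpace ℝ (Fin d) → ℝ), f ∈ N d ∧
      (∫⁻ x, ENNReal.ofReal (|v x - cyl e f x| ^ w) ∂μ < ENNReal.ofReal ε) ∧
      (∫⁻ x, ENNReal.ofReal (‖gradient v x - gradient (cyl e f) x‖ ^ w) ∂μ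
        < ENNReal.ofReal ε) ∧
      (∫⁻ p : H × H, ENNReal.ofReal
          (‖fderiv ℝ (gradient v) p.1 p.2 - fderiv ℝ (gradient (cyl e f)) p.1 p.2‖ ^ w)
          ∂(μ.prod μ') < ENNReal.ofReal ε) := by
  have hw0 : 0 ≤ w := by linarith
  have hq0 : 0 ≤ q := by linarith
  haveI : SecondCountableTopology H := aux_secondCountable e htot
  -- abbreviations
  let v' : ℕ → H → ℝ := fun d x => v ((auxA e d).adjoint (auxA e d x))
  let h : ∀ d : ℕ, EuclideanSpace ℝ (Fin d) → ℝ := fun d y => v ((auxA e d).adjoint y)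
  have hh : ∀ d, ContDiff ℝ 2 (h d) := fun d => hv.comp (auxA e d).adjoint.contDiff
  have hgradh : ∀ d y, gradient (h d) y = auxA e d (gradient v ((auxA e d).adjoint y)) := by
    intro d y
    have := congrFun (aux_gradient_comp hv (auxA e d).adjoint) y
    rwa [ContinuousLinearMap.adjoint_adjoint] at this
  have hhessh : ∀ d y, fderiv ℝ (gradient (h d)) y =
      (auxA e d).comp ((fderiv ℝ (gradient v) ((auxA e d).adjoint y)).comp
        (auxA e d).adjoint) := by
    intro d y
    have := aux_hess_comp hv (auxA e d).adjoint y
    rwa [ContinuousLinearMap.adjoint_adjoint] at this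
  have cgv : Continuous (gradient v) := (aux_contDiff_gradient hv).continuous
  have chv : Continuous (fderiv ℝ (gradient v)) := aux_cont_hess hv
  -- growth
  have hgr : ∀ x z : H, ‖z‖ ≤ ‖x‖ →
      |v z| ^ w + ‖gradient v z‖ ^ w + ‖fderiv ℝ (gradient v) z‖ ^ w ≤ C * (1 + ‖x‖ ^ q) := by
    intro x z hz
    refine (hgrowth z).trans ?_
    gcongr
  have hg1 : ∀ x z : H, ‖z‖ ≤ ‖x‖ → ‖v z‖ ^ w ≤ C * (1 + ‖x‖ ^ q) := by
    intro x z hz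
    have h1 := hgr x z hz
    have h2 : 0 ≤ ‖gradient v z‖ ^ w := by positivity
    have h3 : 0 ≤ ‖fderiv ℝ (gradient v) z‖ ^ w := by positivity
    rw [Real.norm_eq_abs]; linarith
  have hg2 : ∀ x z : H, ‖z‖ ≤ ‖x‖ → ‖gradient v z‖ ^ w ≤ C * (1 + ‖x‖ ^ q) := by
    intro x z hz
    have h1 := hgr x z hz
    have h2 : 0 ≤ |v z| ^ w := by positivity
    have h3 : 0 ≤ ‖fderiv ℝ (gradient v) z‖ ^ w := by positivity
    linarith
  have hg3 : ∀ x z : H, ‖z‖ ≤ ‖x‖ → ‖fderiv ℝ (gradient v) z‖ ^ w ≤ C * (1 + ‖x‖ ^ q) := by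
    intro x z hz
    have h1 := hgr x z hz
    have h2 : 0 ≤ |v z| ^ w := by positivity
    have h3 : 0 ≤ ‖gradient v z‖ ^ w := by positivity
    linarith
  have hint : ∫⁻ x, ENNReal.ofReal (C * (1 + ‖x‖ ^ q)) ∂μ < ⊤ := by
    have : ∀ x : H, ENNReal.ofReal (C * (1 + ‖x‖ ^ q)) =
        ENNReal.ofReal C * (1 + ENNReal.ofReal (‖x‖ ^ q)) := by
      intro x
      rw [ENNReal.ofReal_mul hC.le, ENNReal.ofReal_add zero_le_one (by positivity),
        ENNReal.ofReal_one]
    simp_rw [this]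
    rw [lintegral_const_mul' _ _ ENNReal.ofReal_ne_top, lintegral_add_left measurable_const]
    refine ENNReal.mul_lt_top ENNReal.ofReal_lt_top (ENNReal.add_lt_top.2 ⟨?_, hμq⟩)
    simp
  have mnq : Measurable fun x : H => ENNReal.ofReal (C * (1 + ‖x‖ ^ q)) :=
    (ENNReal.continuous_ofReal.comp (continuous_const.mul (continuous_const.add
      (continuous_norm.rpow_const (fun _ => Or.inr hq0))))).measurable
  have mnw : Measurable fun x : H => ENNReal.ofReal (‖x‖ ^ w) :=
    (ENNReal.continuous_ofReal.comp
      (continuous_norm.rpow_const (fun _ => Or.inr hw0))).measurable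
  have hint2 : ∫⁻ p : H × H, ENNReal.ofReal (C * (1 + ‖p.1‖ ^ q) * ‖p.2‖ ^ w) ∂(μ.prod μ')
      < ⊤ := by
    have : ∀ p : H × H, ENNReal.ofReal (C * (1 + ‖p.1‖ ^ q) * ‖p.2‖ ^ w) =
        ENNReal.ofReal (C * (1 + ‖p.1‖ ^ q)) * ENNReal.ofReal (‖p.2‖ ^ w) := fun p =>
      ENNReal.ofReal_mul (by positivity)
    simp_rw [this]
    rw [lintegral_prod_mul mnq.aemeasurable mnw.aemeasurable]
    exact ENNReal.mul_lt_top hint hμ'w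
  -- step 1 : Galerkin convergence
  have T1 := aux_conv μ w hw v v' hv.continuous
    (fun d => by
      have := hv.continuous
      fun_prop) (fun x => C * (1 + ‖x‖ ^ q))
    (fun x => hg1 x x le_rfl) (fun d x => hg1 x _ (auxP_norm e he d x)) hint
    (fun x => (hv.continuous.tendsto x).comp (auxP_tendsto e he htot x))
  have T2 := aux_conv μ w hw (gradient v)
    (fun d x => (auxA e d).adjoint (auxA e d (gradient v ((auxA e d).adjoint (auxA e d x)))))
    cgv (fun d => by fun_prop) (fun x => C * (1 + ‖x‖ ^ q))
    (fun x => hg2 x x le_rfl)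
    (fun d x => (Real.rpow_le_rpow (norm_nonneg _) (auxP_norm e he d _) hw0).trans
      (hg2 x _ (auxP_norm e he d x))) hint
    (fun x => auxP_tendsto' e he htot _ _
      ((cgv.tendsto x).comp (auxP_tendsto e he htot x)))
  have hb3 : ∀ x z k l : H, ‖z‖ ≤ ‖x‖ → ‖l‖ ≤ ‖k‖ →
      ‖fderiv ℝ (gradient v) z l‖ ^ w ≤ C * (1 + ‖x‖ ^ q) * ‖k‖ ^ w := by
    intro x z k l hz hl
    calc ‖fderiv ℝ (gradient v) z l‖ ^ w ≤ (‖fderiv ℝ (gradient v) z‖ * ‖k‖) ^ w := by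
          apply Real.rpow_le_rpow (norm_nonneg _) _ hw0
          exact ((fderiv ℝ (gradient v) z).le_opNorm l).trans (by gcongr)
      _ = ‖fderiv ℝ (gradient v) z‖ ^ w * ‖k‖ ^ w :=
          Real.mul_rpow (norm_nonneg _) (norm_nonneg _)
      _ ≤ _ := by
          gcongr
          exact hg3 x z hz
  have T3 := aux_conv (μ.prod μ') w hw (fun p : H × H => fderiv ℝ (gradient v) p.1 p.2)
    (fun d p => (auxA e d).adjoint (auxA e d (fderiv ℝ (gradient v)
      ((auxA e d).adjoint (auxA e d p.1)) ((auxA e d).adjoint (auxA e d p.2)))))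
    (by fun_prop) (fun d => by fun_prop) (fun p => C * (1 + ‖p.1‖ ^ q) * ‖p.2‖ ^ w)
    (fun p => hb3 _ _ _ _ le_rfl le_rfl)
    (fun d p => (Real.rpow_le_rpow (norm_nonneg _) (auxP_norm e he d _) hw0).trans
      (hb3 _ _ _ _ (auxP_norm e he d p.1) (auxP_norm e he d p.2))) hint2
    (fun p => auxP_tendsto' e he htot _ _
      ((isBoundedBilinearMap_apply.continuous.tendsto
        (fderiv ℝ (gradient v) p.1, p.2)).comp
        (((chv.tendsto p.1).comp (auxP_tendsto e he htot p.1)).prodMk_nhds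
        (auxP_tendsto e he htot p.2))))
  -- constants
  set K : ℝ := 2 ^ (w - 1) with hK
  have hKpos : 0 < K := by positivity
  set M : ℝ := 1 + (∫⁻ k, ENNReal.ofReal (‖k‖ ^ w) ∂μ').toReal with hM
  have hM1 : 1 ≤ M := by rw [hM]; linarith [ENNReal.toReal_nonneg (a := ∫⁻ k, ENNReal.ofReal (‖k‖ ^ w) ∂μ')]
  have hMle : ∫⁻ k, ENNReal.ofReal (‖k‖ ^ w) ∂μ' ≤ ENNReal.ofReal M := by
    rw [← ENNReal.ofReal_toReal hμ'w.ne]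
    exact ENNReal.ofReal_le_ofReal (by linarith)
  set δ : ℝ := ε / (2 * K) with hδ
  have hδpos : 0 < δ := by positivity
  have hδ' : (0 : ℝ≥0∞) < ENNReal.ofReal δ := ENNReal.ofReal_pos.2 hδpos
  have fin : ∀ s t : ℝ≥0∞, s < ENNReal.ofReal δ → t < ENNReal.ofReal δ →
      ENNReal.ofReal K * (s + t) < ENNReal.ofReal ε := by
    intro s t hs ht
    have : ENNReal.ofReal ε = ENNReal.ofReal K * (ENNReal.ofReal δ + ENNReal.ofReal δ) := by
      rw [← ENNReal.ofReal_add hδpos.le hδpos.le, ← ENNReal.ofReal_mul hKpos.le]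
      congr 1
      rw [hδ]; field_simp; ring
    rw [this]
    exact ENNReal.mul_lt_mul_right (ENNReal.ofReal_pos.2 hKpos).ne' ENNReal.ofReal_ne_top
      (ENNReal.add_lt_add hs ht)
  obtain ⟨d, hd1, hd2, hd3⟩ := ((T1.eventually_lt_const hδ').and
    ((T2.eventually_lt_const hδ').and (T3.eventually_lt_const hδ'))).exists
  have mA : Measurable (auxA e d) := (auxA e d).continuous.measurable
  -- step 2 : finite-dimensional density
  have hB1 := auxB_opnorm e he d
  have hA1 := auxA_opnorm e he d
  have hfin : ∫⁻ y, ENNReal.ofReal (|h d y| ^ w + ‖gradient (h d) y‖ ^ w +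
      ‖fderiv ℝ (gradient (h d)) y‖ ^ w) ∂(μ.map (auxA e d)) < ⊤ := by
    have cg := (aux_contDiff_gradient (hh d)).continuous
    have ch := aux_cont_hess (hh d)
    have c0 := (hh d).continuous
    have mm : Measurable fun y => ENNReal.ofReal (|h d y| ^ w + ‖gradient (h d) y‖ ^ w + ‖fderiv ℝ (gradient (h d)) y‖ ^ w) :=
      (ENNReal.continuous_ofReal.comp
      (((c0.abs.rpow_const (fun _ => Or.inr hw0)).add
        (cg.norm.rpow_const (fun _ => Or.inr hw0))).add
        (ch.norm.rpow_const (fun _ => Or.inr hw0)))).measurable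
    rw [lintegral_map mm mA]
    refine lt_of_le_of_lt (lintegral_mono fun x => ENNReal.ofReal_le_ofReal ?_) hint
    refine le_trans ?_ (hgr x _ (auxP_norm e he d x))
    rw [hgradh, hhessh]
    refine add_le_add (add_le_add le_rfl ?_) ?_
    · exact Real.rpow_le_rpow (norm_nonneg _) (auxA_norm e he d _) hw0
    · apply Real.rpow_le_rpow (norm_nonneg _) _ hw0
      refine ((auxA e d).opNorm_comp_le _).trans ?_
      refine (mul_le_of_le_one_left (norm_nonneg _) hA1).trans ?_
      refine (ContinuousLinearMap.opNorm_comp_le _ _).trans ?_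
      exact mul_le_of_le_one_right (norm_nonneg _) hB1
  obtain ⟨f, hfN, hf⟩ := hNdense d w hw (μ.map (auxA e d)) inferInstance (h d) (hh d) hfin
    (δ / M) (by positivity)
  have hfs := hNsmooth d f hfN
  have c0 := (hh d).continuous.sub hfs.continuous
  have cg := (aux_contDiff_gradient (hh d)).continuous.sub (aux_contDiff_gradient hfs).continuous
  have ch := (aux_cont_hess (hh d)).sub (aux_cont_hess hfs)
  have mm : Measurable fun y => ENNReal.ofReal (|h d y - f y| ^ w + ‖gradient (h d) y - gradient f y‖ ^ w + ‖fderiv ℝ (gradient (h d)) y - fderiv ℝ (gradient f) y‖ ^ w) :=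
      (ENNReal.continuous_ofReal.comp
      (((c0.abs.rpow_const (fun _ => Or.inr hw0)).add
        (cg.norm.rpow_const (fun _ => Or.inr hw0))).add
        (ch.norm.rpow_const (fun _ => Or.inr hw0)))).measurable
  rw [lintegral_map mm mA] at hf
  have hle : ENNReal.ofReal (δ / M) ≤ ENNReal.ofReal δ :=
    ENNReal.ofReal_le_ofReal (div_le_self hδpos.le hM1)
  have hgc : gradient (cyl e f) = fun x => (auxA e d).adjoint (gradient f (auxA e d x)) :=
    aux_gradient_comp hfs (auxA e d)
  have hhc : ∀ x, fderiv ℝ (gradient (cyl e f)) x = (auxA e d).adjoint.comp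
      ((fderiv ℝ (gradient f) (auxA e d x)).comp (auxA e d)) := aux_hess_comp hfs (auxA e d)
  refine ⟨d, f, hfN, ?_, ?_, ?_⟩
  · refine lt_of_le_of_lt (aux_triangle μ w hw v (v' d) (cyl e f) hv.continuous ?_) (fin _ _ hd1 ?_)
    · have := hv.continuous
      fun_prop
    · refine lt_of_le_of_lt (lintegral_mono fun x => ENNReal.ofReal_le_ofReal ?_)
        (lt_of_lt_of_le hf hle)
      rw [add_assoc]
      exact le_add_of_nonneg_right (by positivity)
  · refine lt_of_le_of_lt (aux_triangle μ w hw _ _ (gradient (cyl e f)) cgv ?_) (fin _ _ hd2 ?_)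
    · fun_prop
    · refine lt_of_le_of_lt (lintegral_mono fun x => ENNReal.ofReal_le_ofReal ?_)
        (lt_of_lt_of_le hf hle)
      rw [hgc, ← map_sub, auxB_norm e he, ← hgradh, add_assoc]
      refine le_trans ?_ (le_add_of_nonneg_left (by positivity))
      exact le_add_of_nonneg_right (by positivity)
  · refine lt_of_le_of_lt (aux_triangle (μ.prod μ') w hw _ _
      (fun p : H × H => fderiv ℝ (gradient (cyl e f)) p.1 p.2) (by fun_prop) ?_)
      (fin _ _ hd3 ?_)
    · fun_prop
    · have mD : Measurable fun x : H => ENNReal.ofReal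
          (‖fderiv ℝ (gradient (h d)) (auxA e d x) - fderiv ℝ (gradient f) (auxA e d x)‖ ^ w) :=
        (ENNReal.continuous_ofReal.comp ((ch.comp (auxA e d).continuous).norm.rpow_const
          (fun _ => Or.inr hw0))).measurable
      have step : ∫⁻ p : H × H, ENNReal.ofReal
          (‖fderiv ℝ (gradient (h d)) (auxA e d p.1) - fderiv ℝ (gradient f) (auxA e d p.1)‖ ^ w)
          * ENNReal.ofReal (‖p.2‖ ^ w) ∂(μ.prod μ') < ENNReal.ofReal δ := by
        rw [lintegral_prod_mul mD.aemeasurable mnw.aemeasurable]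
        have : ENNReal.ofReal δ = ENNReal.ofReal (δ / M) * ENNReal.ofReal M := by
          rw [← ENNReal.ofReal_mul (by positivity)]
          congr 1
          field_simp
        rw [this]
        refine lt_of_le_of_lt (mul_le_mul_right hMle _) ?_
        refine ENNReal.mul_lt_mul_left (ENNReal.ofReal_pos.2 (by positivity)).ne'
          ENNReal.ofReal_ne_top ?_
        refine lt_of_le_of_lt (lintegral_mono fun x => ENNReal.ofReal_le_ofReal ?_) hf
        exact le_add_of_nonneg_left (by positivity)
      refine lt_of_le_of_lt (lintegral_mono fun p => ?_) step
      rw [← ENNReal.ofReal_mul (by positivity)]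
      apply ENNReal.ofReal_le_ofReal
      rw [← Real.mul_rpow (norm_nonneg _) (norm_nonneg _)]
      apply Real.rpow_le_rpow (norm_nonneg _) _ hw0
      rw [hhc]
      simp only [ContinuousLinearMap.comp_apply]
      rw [← map_sub, auxB_norm e he]
      have e1 : auxA e d (fderiv ℝ (gradient v)
          ((auxA e d).adjoint (auxA e d p.1)) ((auxA e d).adjoint (auxA e d p.2))) =
          fderiv ℝ (gradient (h d)) (auxA e d p.1) (auxA e d p.2) := by
        rw [hhessh]; rfl
      rw [e1, ← ContinuousLinearMap.sub_apply]
      refine (ContinuousLinearMap.le_opNorm _ _).trans ?_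
      gcongr
      exact auxA_norm e he d p.2
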